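/- arXiv:1504.04279 — 2 statements merged into one kernel-verified Lean document; each statement's English description precedes it below -/
import Mathlib

section
/- The relative simplicial complex Q = X̄ ∖ A is not partitionable. -/
/-- The facets (maximal faces) of a collection of finite sets. -/
def facets {V : Type*} [DecidableEq V] (Φ : Finset (Finset V)) : Finset (Finset V) :=
  Φ.filter (fun F => ∀ G ∈ Φ, F ⊆ G → F = G)

/-- A (relative or absolute) simplicial complex `Φ` is partitionable if it decomposes as a
disjoint union of Boolean intervals `[R F, F]`, one for each facet `F`. -/
def Partitionable {V : Type*} [DecidableEq V] (Φ : Finset (Finset V)) : Prop :=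
  ∃ R : Finset V → Finset V,
    (∀ F ∈ facets Φ, R F ⊆ F) ∧
    (∀ F ∈ facets Φ, ∀ σ : Finset V, R F ⊆ σ → σ ⊆ F → σ ∈ Φ) ∧
    (∀ σ ∈ Φ, ∃! F, F ∈ facets Φ ∧ R F ⊆ σ ∧ σ ⊆ F)

/-- The simplicial complex generated by a list of facets. -/
def gen (L : List (Finset ℕ)) : Finset (Finset ℕ) :=
  L.toFinset.biUnion Finset.powerset

/-- The combinatorial closure `X̄` of the relative complex `Q`, a simplicial complex on
vertices `{0,…,9}` with fourteen facets. -/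
def Xbar : Finset (Finset ℕ) :=
  gen [{1,2,4,9},{1,2,6,9},{1,5,6,9},{1,5,8,9},{1,4,8,9},{1,4,5,8},{1,4,5,7},
       {4,5,7,8},{1,2,5,6},{0,1,2,5},{0,2,5,6},{0,1,2,3},{1,2,3,4},{1,3,4,7}]

/-- The subcomplex `A` of `X̄`, generated by five triangles. -/
def Acx : Finset (Finset ℕ) :=
  gen [{0,2,6},{0,2,3},{2,3,4},{3,4,7},{4,7,8}]

/-!
A face contained in only one facet lies in the interval of that facet, and the intersection of two
faces in the same interval lies in it too. Thus `{1, 6}` is in the interval of `{1, 2, 5, 6}`: the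
two other facets containing it have `{2, 6, 9}` or `{5, 6, 9}` in their intervals, which meet
`{1, 6}` in `{6}`, not a face of `Q`. So `{2, 5}`, which is disjoint from `{1, 6}`, must be in the
interval of `{0, 1, 2, 5}` or `{0, 2, 5, 6}`; there it meets the free face `{0, 1, 5}` or
`{0, 5, 6}` in `{5}`. Hence the facet whose interval contains `{5}` contains the vertex `2`. As the
permutation `(0 7)(2 4)(6 8)` is an automorphism of `Q`, this facet also contains `4`, but no face
of `Q` contains `2`, `4` and `5`.
-/

theorem finsetCongr_subset_finsetCongr {V W : Type*} (e : V ≃ W) {σ τ : Finset V} :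
    e.finsetCongr σ ⊆ e.finsetCongr τ ↔ σ ⊆ τ :=
  Finset.map_subset_map

section Partitioning

variable {V W : Type*} [DecidableEq V] [DecidableEq W] {Φ : Finset (Finset V)}
  {R : Finset V → Finset V} {F G σ τ : Finset V}

theorem mem_facets : F ∈ facets Φ ↔ F ∈ Φ ∧ ∀ G ∈ Φ, F ⊆ G → F = G :=
  Finset.mem_filter

/-- The facets of `Φ` that contain `σ`: the candidates for the interval in which a partitioning
puts `σ`. -/
def facetsAbove (Φ : Finset (Finset V)) (σ : Finset V) : Finset (Finset V) :=
  (facets Φ).filter (σ ⊆ ·)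

/-- `σ` is a free face of `Φ` below the facet `F`: a face that lies in no other facet. -/
structure IsFreeFace (Φ : Finset (Finset V)) (F σ : Finset V) : Prop where
  mem : σ ∈ Φ
  facetsAbove_eq : facetsAbove Φ σ = {F}

/-- The facet `F` of `Φ` owns `σ` under the restriction map `R` if `σ` lies in `[R F, F]`. -/
def Owns (Φ : Finset (Finset V)) (R : Finset V → Finset V) (F σ : Finset V) : Prop :=
  F ∈ facets Φ ∧ R F ⊆ σ ∧ σ ⊆ F

theorem Owns.mem_facetsAbove (h : Owns Φ R F σ) : F ∈ facetsAbove Φ σ :=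
  Finset.mem_filter.2 ⟨h.1, h.2.2⟩

theorem Owns.inter (hσ : Owns Φ R F σ) (hτ : Owns Φ R F τ) : Owns Φ R F (σ ∩ τ) :=
  ⟨hσ.1, Finset.subset_inter hσ.2.1 hτ.2.1, Finset.inter_subset_left.trans hσ.2.2⟩

/-- A partitioning of `Φ`, encoded by its restriction map `R` (only the values of `R` on facets
matter): the intervals `[R F, F]` partition `Φ`. -/
structure IsPartitioning (Φ : Finset (Finset V)) (R : Finset V → Finset V) : Prop where
  subset : ∀ F ∈ facets Φ, R F ⊆ F
  mem_of_owns : ∀ F σ, Owns Φ R F σ → σ ∈ Φ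
  existsUnique_owns : ∀ σ ∈ Φ, ∃! F, Owns Φ R F σ

theorem Partitionable.exists_isPartitioning (h : Partitionable Φ) : ∃ R, IsPartitioning Φ R :=
  let ⟨R, hsubset, hmem, hunique⟩ := h
  ⟨R, hsubset, fun F σ hσ ↦ hmem F hσ.1 σ hσ.2.1 hσ.2.2, hunique⟩

namespace IsPartitioning

theorem exists_owns (hR : IsPartitioning Φ R) (hσ : σ ∈ Φ) : ∃ F, Owns Φ R F σ :=
  (hR.existsUnique_owns σ hσ).exists

theorem owns_unique (hR : IsPartitioning Φ R) (hF : Owns Φ R F σ) (hG : Owns Φ R G σ) : F = G :=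
  (hR.existsUnique_owns σ (hR.mem_of_owns F σ hF)).unique hF hG

theorem owns_of_isFreeFace (hR : IsPartitioning Φ R) (hτ : IsFreeFace Φ F τ) : Owns Φ R F τ := by
  obtain ⟨G, hG⟩ := hR.exists_owns hτ.mem
  obtain rfl : G = F := Finset.mem_singleton.1 (hτ.facetsAbove_eq ▸ hG.mem_facetsAbove)
  exact hG

theorem not_owns_of_inter_notMem (hR : IsPartitioning Φ R) (hτ : Owns Φ R F τ)
    (hστ : σ ∩ τ ∉ Φ) : ¬ Owns Φ R F σ :=
  fun hσ ↦ hστ (hR.mem_of_owns F _ (hσ.inter hτ))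

end IsPartitioning

theorem finsetCongr_mem_facets_map (e : V ≃ W) :
    e.finsetCongr F ∈ facets (Φ.map e.finsetCongr.toEmbedding) ↔ F ∈ facets Φ := by
  simp only [mem_facets, ← e.finsetCongr.forall_congr_right, Finset.mem_map_equiv,
    Equiv.symm_apply_apply, finsetCongr_subset_finsetCongr, EmbeddingLike.apply_eq_iff_eq]

theorem owns_map_finsetCongr (e : V ≃ W) :
    Owns (Φ.map e.finsetCongr.toEmbedding) (e.finsetCongr ∘ R ∘ e.finsetCongr.symm)
      (e.finsetCongr F) (e.finsetCongr σ) ↔ Owns Φ R F σ := by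
  simp only [Owns, finsetCongr_mem_facets_map, Function.comp_apply, Equiv.symm_apply_apply,
    finsetCongr_subset_finsetCongr]

theorem IsPartitioning.map (hR : IsPartitioning Φ R) (e : V ≃ W) :
    IsPartitioning (Φ.map e.finsetCongr.toEmbedding)
      (e.finsetCongr ∘ R ∘ e.finsetCongr.symm) where
  subset := by
    refine e.finsetCongr.forall_congr_right.1 fun F hF ↦ ?_
    simpa only [Function.comp_apply, Equiv.symm_apply_apply, finsetCongr_subset_finsetCongr]
      using hR.subset F ((finsetCongr_mem_facets_map e).1 hF)
  mem_of_owns := by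
    refine e.finsetCongr.forall_congr_right.1 fun F ↦
      e.finsetCongr.forall_congr_right.1 fun σ hσ ↦ ?_
    exact Finset.mem_map_of_mem _ (hR.mem_of_owns F σ ((owns_map_finsetCongr e).1 hσ))
  existsUnique_owns := by
    refine Finset.forall_mem_map.2 fun σ hσ ↦ ?_
    rw [← e.finsetCongr.existsUnique_congr_right]
    simpa only [Equiv.coe_toEmbedding, owns_map_finsetCongr] using hR.existsUnique_owns σ hσ

end Partitioning

section Gen

variable {K L : List (Finset ℕ)} {σ : Finset ℕ}

theorem mem_gen : σ ∈ gen L ↔ ∃ F ∈ L, σ ⊆ F := by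
  simp only [gen, Finset.mem_biUnion, List.mem_toFinset, Finset.mem_powerset]

theorem mem_gen_sdiff_gen :
    σ ∈ gen K \ gen L ↔ (∃ F ∈ K, σ ⊆ F) ∧ ∀ G ∈ L, ¬ σ ⊆ G := by
  simp only [Finset.mem_sdiff, mem_gen, not_exists, not_and]

theorem facets_gen_sdiff_gen (hK : ∀ F ∈ K, ∀ G ∈ K, F ⊆ G → F = G)
    (hKL : ∀ F ∈ K, ∀ G ∈ L, ¬ F ⊆ G) : facets (gen K \ gen L) = K.toFinset := by
  have mem_of_mem {F} (hF : F ∈ K) : F ∈ gen K \ gen L :=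
    mem_gen_sdiff_gen.2 ⟨⟨F, hF, subset_rfl⟩, hKL F hF⟩
  ext F
  rw [mem_facets, List.mem_toFinset]
  constructor
  · rintro ⟨hF, hmax⟩
    obtain ⟨⟨G, hG, hFG⟩, -⟩ := mem_gen_sdiff_gen.1 hF
    rwa [hmax G (mem_of_mem hG) hFG]
  · refine fun hF ↦ ⟨mem_of_mem hF, fun G hG hFG ↦ ?_⟩
    obtain ⟨⟨H, hH, hGH⟩, -⟩ := mem_gen_sdiff_gen.1 hG
    exact hFG.antisymm (hK F hF H hH (hFG.trans hGH) ▸ hGH)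

theorem map_gen (e : Equiv.Perm ℕ) :
    (gen L).map e.finsetCongr.toEmbedding = gen (L.map e.finsetCongr) := by
  ext σ
  obtain ⟨σ, rfl⟩ := e.finsetCongr.surjective σ
  simp only [Finset.mem_map_equiv, Equiv.symm_apply_apply, mem_gen, List.mem_map,
    exists_exists_and_eq_and, finsetCongr_subset_finsetCongr]

theorem gen_eq_of_perm (h : K.Perm L) : gen K = gen L := by
  rw [gen, gen, List.toFinset_eq_of_perm K L h]

end Gen

/-- The relative complex `Q = X̄ ∖ A`. -/
def Q : Finset (Finset ℕ) :=
  Xbar \ Acx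

/-- The fourteen facets of `X̄`, which are also the facets of `Q`. -/
def xbarFacets : List (Finset ℕ) :=
  [{1,2,4,9},{1,2,6,9},{1,5,6,9},{1,5,8,9},{1,4,8,9},{1,4,5,8},{1,4,5,7},
   {4,5,7,8},{1,2,5,6},{0,1,2,5},{0,2,5,6},{0,1,2,3},{1,2,3,4},{1,3,4,7}]

/-- The five facets of `A`. -/
def acxFacets : List (Finset ℕ) :=
  [{0,2,6},{0,2,3},{2,3,4},{3,4,7},{4,7,8}]

theorem mem_Q {σ : Finset ℕ} :
    σ ∈ Q ↔ (∃ F ∈ xbarFacets, σ ⊆ F) ∧ ∀ G ∈ acxFacets, ¬ σ ⊆ G :=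
  mem_gen_sdiff_gen

theorem facets_Q : facets Q = xbarFacets.toFinset :=
  facets_gen_sdiff_gen (L := acxFacets) (by decide) (by decide)

theorem facetsAbove_Q (σ : Finset ℕ) :
    facetsAbove Q σ = xbarFacets.toFinset.filter (σ ⊆ ·) := by
  rw [facetsAbove, facets_Q]

/-- The permutation `(0 7)(2 4)(6 8)` of the vertices. -/
def mirror : Equiv.Perm ℕ :=
  Equiv.swap 0 7 * Equiv.swap 2 4 * Equiv.swap 6 8

theorem map_mirror_Q : Q.map mirror.finsetCongr.toEmbedding = Q := by
  have hXbar : (xbarFacets.map mirror.finsetCongr).Perm xbarFacets := by decide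
  have hAcx : (acxFacets.map mirror.finsetCongr).Perm acxFacets := by decide
  change (gen xbarFacets \ gen acxFacets).map _ = gen xbarFacets \ gen acxFacets
  rw [Finset.map_sdiff, map_gen, map_gen, gen_eq_of_perm hXbar, gen_eq_of_perm hAcx]

section

variable {R : Finset ℕ → Finset ℕ} {F : Finset ℕ}

theorem owns_one_six (hR : IsPartitioning Q R) : Owns Q R {1,2,5,6} {1,6} := by
  have free_269 : IsFreeFace Q {1,2,6,9} {2,6,9} :=
    ⟨mem_Q.2 (by decide), (facetsAbove_Q _).trans (by decide)⟩
  have free_569 : IsFreeFace Q {1,5,6,9} {5,6,9} :=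
    ⟨mem_Q.2 (by decide), (facetsAbove_Q _).trans (by decide)⟩
  have facetsAbove_16 : facetsAbove Q {1,6} = {{1,2,6,9},{1,5,6,9},{1,2,5,6}} :=
    (facetsAbove_Q _).trans (by decide)
  have six_notMem : {6} ∉ Q := mt mem_Q.1 (by decide)
  obtain ⟨F, hF⟩ := hR.exists_owns (σ := {1,6}) (mem_Q.2 (by decide))
  have hmem := hF.mem_facetsAbove
  simp only [facetsAbove_16, Finset.mem_insert, Finset.mem_singleton] at hmem
  rcases hmem with rfl | rfl | rfl
  · exact absurd hF
      (hR.not_owns_of_inter_notMem (hR.owns_of_isFreeFace free_269) six_notMem)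
  · exact absurd hF
      (hR.not_owns_of_inter_notMem (hR.owns_of_isFreeFace free_569) six_notMem)
  · exact hF

theorem two_mem_of_owns_five (hR : IsPartitioning Q R) (hF : Owns Q R F {5}) : 2 ∈ F := by
  have free_015 : IsFreeFace Q {0,1,2,5} {0,1,5} :=
    ⟨mem_Q.2 (by decide), (facetsAbove_Q _).trans (by decide)⟩
  have free_056 : IsFreeFace Q {0,2,5,6} {0,5,6} :=
    ⟨mem_Q.2 (by decide), (facetsAbove_Q _).trans (by decide)⟩
  have empty_notMem : ∅ ∉ Q := mt mem_Q.1 (by decide)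
  have facetsAbove_25 : facetsAbove Q {2,5} = {{1,2,5,6},{0,1,2,5},{0,2,5,6}} :=
    (facetsAbove_Q _).trans (by decide)
  obtain ⟨G, hG⟩ := hR.exists_owns (σ := {2,5}) (mem_Q.2 (by decide))
  have hmem := hG.mem_facetsAbove
  simp only [facetsAbove_25, Finset.mem_insert, Finset.mem_singleton] at hmem
  rcases hmem with rfl | rfl | rfl
  · exact absurd hG (hR.not_owns_of_inter_notMem (owns_one_six hR) empty_notMem)
  · rw [hR.owns_unique hF (hG.inter (hR.owns_of_isFreeFace free_015))]
    decide
  · rw [hR.owns_unique hF (hG.inter (hR.owns_of_isFreeFace free_056))]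
    decide

theorem four_mem_of_owns_five (hR : IsPartitioning Q R) (hF : Owns Q R F {5}) : 4 ∈ F := by
  have hR' := hR.map mirror
  have hF' := (owns_map_finsetCongr mirror).2 hF
  rw [map_mirror_Q] at hR' hF'
  exact Finset.mem_map_equiv.1 (two_mem_of_owns_five hR' hF')

end

/-- The relative simplicial complex `Q = X̄ ∖ A` is not partitionable. -/
theorem Q_not_partitionable : ¬ Partitionable (Xbar \ Acx) := by
  intro h
  obtain ⟨R, hR⟩ : ∃ R, IsPartitioning Q R := h.exists_isPartitioning
  obtain ⟨F, hF⟩ := hR.exists_owns (σ := {5}) (mem_Q.2 (by decide))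
  have two_mem : 2 ∈ F := two_mem_of_owns_five hR hF
  have four_mem : 4 ∈ F := four_mem_of_owns_five hR hF
  have five_notMem : ∀ G ∈ facets Q, 2 ∈ G → 4 ∈ G → 5 ∉ G := by
    rw [facets_Q]
    decide
  exact five_notMem F hF.1 two_mem four_mem (Finset.singleton_subset_iff.1 hF.2.2)
end

section
/- The ordering 1249, 1269, 1569, 1589, 1489, 1458, 1457, 4578, 1256, 0125, 0256, 0123, 1234, 1347 of the facets of X̄ is a shelling of X̄; in particular X̄ is shellable. -/
/-- A list `L = [F_1, …, F_n]` is a shelling of the pure simplicial complex `Δ` if it is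
an ordering of the facets of `Δ` without repetition such that for every `j`, the set
`{σ ⊆ F_j : σ ⊄ F_i for all i < j}` has a unique minimal element `R_j` (equivalently,
a minimum element `R_j`). -/
def IsShelling {V : Type*} [DecidableEq V] (Δ : Finset (Finset V)) (L : List (Finset V)) :
    Prop :=
  L.Nodup ∧ (∀ F, F ∈ L ↔ F ∈ facets Δ) ∧
    ∀ j : Fin L.length, ∃ R : Finset V,
      (R ⊆ L.get j ∧ ∀ i : Fin L.length, i < j → ¬ R ⊆ L.get i) ∧
      (∀ σ : Finset V, σ ⊆ L.get j → (∀ i : Fin L.length, i < j → ¬ σ ⊆ L.get i) → R ⊆ σ)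

/-- A pure simplicial complex is shellable if it admits a shelling. -/
def Shellable {V : Type*} [DecidableEq V] (Δ : Finset (Finset V)) : Prop :=
  ∃ L : List (Finset V), IsShelling Δ L

section Facets

variable {V : Type*} [DecidableEq V]

theorem mem_facets_iff_maximal {Φ : Finset (Finset V)} {F : Finset V} :
    F ∈ facets Φ ↔ Maximal (· ∈ Φ) F := by
  simp only [facets, Finset.mem_filter, maximal_iff]

theorem facets_biUnion_powerset {A : Finset (Finset V)}
    (hA : IsAntichain (· ⊆ ·) (A : Set (Finset V))) :
    facets (A.biUnion Finset.powerset) = A := by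
  ext F
  have mem_iff (σ : Finset V) :
      σ ∈ A.biUnion Finset.powerset ↔ σ ∈ lowerClosure (A : Set (Finset V)) := by
    simp only [Finset.mem_biUnion, Finset.mem_powerset, mem_lowerClosure, Finset.mem_coe]
  simp only [mem_facets_iff_maximal, mem_iff]
  exact hA.maximal_mem_lowerClosure_iff_mem

end Facets

section Restriction

variable {V : Type*} [DecidableEq V] {Δ : Finset (Finset V)} {L : List (Finset V)}
  {j : Fin L.length} {R σ : Finset V}

/-- The faces of the `j`-th member `F_j` of `L` that lie in no earlier member: those added to the
complex when `F_j` is attached. -/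
def newFaces (L : List (Finset V)) (j : Fin L.length) : Set (Finset V) :=
  {σ | σ ⊆ L.get j ∧ ∀ i : Fin L.length, i < j → ¬ σ ⊆ L.get i}

/-- The restriction `R_j` of the `j`-th member `F_j` of `L`, in its combinatorial form: the
vertices `v` for which the ridge `F_j \ {v}` lies in an earlier member of `L`. -/
def restriction (L : List (Finset V)) (j : Fin L.length) : Finset V :=
  (L.get j).filter fun v => ∃ i : Fin L.length, i < j ∧ (L.get j).erase v ⊆ L.get i

theorem restriction_subset_get : restriction L j ⊆ L.get j :=
  Finset.filter_subset _ _

theorem restriction_subset_of_mem_newFaces (hσ : σ ∈ newFaces L j) : restriction L j ⊆ σ := by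
  intro v hv
  obtain ⟨-, i, hij, hridge⟩ := Finset.mem_filter.mp hv
  by_contra hvσ
  exact hσ.2 i hij ((Finset.subset_erase.mpr ⟨hσ.1, hvσ⟩).trans hridge)

theorem subset_restriction_of_mem_lowerBounds (hR : R ⊆ L.get j)
    (hmin : R ∈ lowerBounds (newFaces L j)) : R ⊆ restriction L j := by
  intro v hv
  have ridge_old : (L.get j).erase v ∉ newFaces L j := fun hnew =>
    Finset.notMem_erase v _ (hmin hnew hv)
  obtain ⟨i, hij, hridge⟩ : ∃ i : Fin L.length, i < j ∧ (L.get j).erase v ⊆ L.get i := by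
    simpa [newFaces, Finset.erase_subset] using ridge_old
  exact Finset.mem_filter.mpr ⟨hR hv, i, hij, hridge⟩

theorem exists_isLeast_newFaces_iff :
    (∃ R, IsLeast (newFaces L j) R) ↔ ∀ i : Fin L.length, i < j → ¬ restriction L j ⊆ L.get i := by
  constructor
  · rintro ⟨R, hR⟩ i hij hold
    exact hR.1.2 i hij ((subset_restriction_of_mem_lowerBounds hR.1.1 hR.2).trans hold)
  · exact fun hnew => ⟨restriction L j, ⟨restriction_subset_get, hnew⟩,
      fun _ => restriction_subset_of_mem_newFaces⟩

theorem isShelling_iff_not_restriction_subset :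
    IsShelling Δ L ↔ L.Nodup ∧ (∀ F, F ∈ L ↔ F ∈ facets Δ) ∧
      ∀ j i : Fin L.length, i < j → ¬ restriction L j ⊆ L.get i := by
  simp only [← exists_isLeast_newFaces_iff, IsShelling, IsLeast, newFaces, lowerBounds,
    Set.mem_ofPred_eq, and_imp]

end Restriction

theorem sized_xbarFacets : (xbarFacets.toFinset : Set (Finset ℕ)).Sized 4 := by
  simp [Set.Sized, xbarFacets]

theorem facets_Xbar : facets Xbar = xbarFacets.toFinset :=
  facets_biUnion_powerset sized_xbarFacets.isAntichain

/-- The restrictions `R_j` of the facets of `X̄`, in the given ordering. -/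
def xbarRestrictions : Fin xbarFacets.length → Finset ℕ :=
  ![∅, {6}, {5}, {8}, {4,8}, {4,5}, {7}, {7,8}, {2,5}, {0}, {0,6}, {3}, {3,4}, {3,7}]

theorem restriction_xbarFacets : ∀ j, restriction xbarFacets j = xbarRestrictions j := by
  decide

theorem not_restriction_xbarFacets_subset (j i : Fin xbarFacets.length) (hij : i < j) :
    ¬ restriction xbarFacets j ⊆ xbarFacets.get i := by
  rw [restriction_xbarFacets]
  revert i j
  decide

/-- The given ordering of the fourteen facets of `X̄` is a shelling; in particular `X̄`
is shellable. -/
theorem Xbar_shelling :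
    IsShelling Xbar
      [{1,2,4,9},{1,2,6,9},{1,5,6,9},{1,5,8,9},{1,4,8,9},{1,4,5,8},{1,4,5,7},
       {4,5,7,8},{1,2,5,6},{0,1,2,5},{0,2,5,6},{0,1,2,3},{1,2,3,4},{1,3,4,7}] ∧
    Shellable Xbar := by
  have hfacets (F : Finset ℕ) : F ∈ xbarFacets ↔ F ∈ facets Xbar := by
    rw [facets_Xbar, List.mem_toFinset]
  have hshelling : IsShelling Xbar xbarFacets :=
    isShelling_iff_not_restriction_subset.mpr
      ⟨by decide, hfacets, not_restriction_xbarFacets_subset⟩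
  exact ⟨hshelling, xbarFacets, hshelling⟩
end
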